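/- Let v : ℝ → ℝ → ℝ be a smooth function of (x,t) with v(x,t) ≠ 0 for all (x,t), satisfying the 3rd potential Kupershmidt equation v_t = v_{5x} - 5·v_{xx}v_{4x}/v_x + 5·v_{xx}²v_{xxx}/v_x², with v_x(x,t) ≠ 0 for all (x,t). Then for any constant c ∈ ℝ, the function v̄(x,t) := -1/v(x,t) + c also satisfies the 3rd potential Kupershmidt equation v̄_t = v̄_{5x} - 5·v̄_{xx}v̄_{4x}/v̄_x + 5·v̄_{xx}²v̄_{xxx}/v̄_x². -/

import Mathlib

/-!
Only the chain rule in `t` and the first five `x`-derivatives of `w = -1 / v + c` are needed.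
Each `x`-derivative of `w` is an explicit polynomial in `1 / v` and the `x`-derivatives of `v`;
substituting these and `w_t = v_t / v ^ 2` turns the equation for `w` into the equation for `v`
divided by `v ^ 2`. The cancellation reflects that the right-hand side equals `v_x (S_xx + 4 S ^ 2)`
with `S = v_xxx / v_x - (3 / 2) (v_xx / v_x) ^ 2` the Schwarzian derivative, which is invariant
under Möbius transformations of `v`.
-/

/-- Total `x`-derivative of a function of `(x, t)`. -/
noncomputable def dx (f : ℝ → ℝ → ℝ) : ℝ → ℝ → ℝ := fun x t => deriv (fun y => f y t) x

/-- Total `t`-derivative of a function of `(x, t)`. -/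
noncomputable def dt (f : ℝ → ℝ → ℝ) : ℝ → ℝ → ℝ := fun x t => deriv (fun s => f x s) t

/-- The 3rd potential Kupershmidt equation. -/
def Kup3 (v : ℝ → ℝ → ℝ) : Prop :=
  ∀ x t, dt v x t =
    dx (dx (dx (dx (dx v)))) x t
    - 5 * dx (dx v) x t * dx (dx (dx (dx v))) x t / dx v x t
    + 5 * (dx (dx v) x t)^2 * dx (dx (dx v)) x t / (dx v x t)^2

/-- Smoothness in `x` for each fixed `t`, the only regularity in `x` that the computation uses. -/
def XSmooth (f : ℝ → ℝ → ℝ) : Prop := ∀ t, ContDiff ℝ (⊤ : ℕ∞) (fun y => f y t)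

lemma XSmooth.dx {f : ℝ → ℝ → ℝ} (hf : XSmooth f) : XSmooth (dx f) := fun t =>
  (contDiff_infty_iff_deriv.mp (hf t)).2

lemma XSmooth.hasDerivAt {f : ℝ → ℝ → ℝ} (hf : XSmooth f) (x t : ℝ) :
    HasDerivAt (fun y => f y t) (_root_.dx f x t) x :=
  (contDiff_infty_iff_deriv.mp (hf t)).1.differentiableAt.hasDerivAt

lemma dx_eq_of_hasDerivAt {f g : ℝ → ℝ → ℝ}
    (h : ∀ x t, HasDerivAt (fun y => f y t) (g x t) x) : dx f = g := by
  funext x t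
  exact (h x t).deriv

/-- Invariance of the 3rd potential Kupershmidt equation under `v ↦ -1/v + c`. -/
theorem kup3_invariance_inverse
    (v : ℝ → ℝ → ℝ)
    (hv : ContDiff ℝ (⊤ : ℕ∞) (fun p : ℝ × ℝ => v p.1 p.2))
    (hne : ∀ x t, v x t ≠ 0)
    (hvx : ∀ x t, dx v x t ≠ 0)
    (heq : Kup3 v) (c : ℝ) :
    Kup3 (fun x t => -1 / v x t + c) := by
  have s0 : XSmooth v := fun t => hv.comp (contDiff_id.prodMk contDiff_const)
  have ht : ∀ x t, HasDerivAt (fun s => v x s) (dt v x t) t := fun x t =>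
    ((hv.comp (contDiff_const.prodMk contDiff_id : ContDiff ℝ _ fun s : ℝ => (x, s))).differentiable
      (by simp)).differentiableAt.hasDerivAt
  have wt : ∀ x t, dt (fun x t => -1 / v x t + c) x t = dt v x t / v x t ^ 2 := by
    intro x t
    refine HasDerivAt.deriv ?_
    refine (((hasDerivAt_const t (-1 : ℝ)).fun_div (ht x t) (hne x t)).add_const c).congr_deriv ?_
    ring
  have h0 := s0.hasDerivAt
  have h1 := s0.dx.hasDerivAt
  have h2 := s0.dx.dx.hasDerivAt
  have h3 := s0.dx.dx.dx.hasDerivAt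
  have h4 := s0.dx.dx.dx.dx.hasDerivAt
  have key := heq
  unfold Kup3 at key
  generalize dx (dx (dx (dx (dx v)))) = v5 at *
  generalize dx (dx (dx (dx v))) = v4 at *
  generalize dx (dx (dx v)) = v3 at *
  generalize dx (dx v) = v2 at *
  generalize dx v = v1 at *
  have w1 : dx (fun x t => -1 / v x t + c) = fun x t => v1 x t / v x t ^ 2 := by
    refine dx_eq_of_hasDerivAt fun x t => ?_
    refine (((hasDerivAt_const x (-1 : ℝ)).fun_div (h0 x t) (hne x t)).add_const c).congr_deriv ?_
    ring
  have w2 : dx (fun x t => v1 x t / v x t ^ 2) =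
      fun x t => v2 x t / v x t ^ 2 - 2 * v1 x t ^ 2 / v x t ^ 3 := by
    refine dx_eq_of_hasDerivAt fun x t => ?_
    have n := hne x t
    refine ((h1 x t).fun_div ((h0 x t).fun_pow 2) (pow_ne_zero 2 n)).congr_deriv ?_
    field_simp
    ring
  have w3 : dx (fun x t => v2 x t / v x t ^ 2 - 2 * v1 x t ^ 2 / v x t ^ 3) =
      fun x t => v3 x t / v x t ^ 2 - 6 * (v1 x t * v2 x t) / v x t ^ 3
        + 6 * v1 x t ^ 3 / v x t ^ 4 := by
    refine dx_eq_of_hasDerivAt fun x t => ?_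
    have n := hne x t
    refine (((h2 x t).fun_div ((h0 x t).fun_pow 2) (pow_ne_zero 2 n)).fun_sub
      ((((h1 x t).fun_pow 2).const_mul 2).fun_div ((h0 x t).fun_pow 3) (pow_ne_zero 3 n))).congr_deriv ?_
    field_simp
    ring
  have w4 : dx (fun x t => v3 x t / v x t ^ 2 - 6 * (v1 x t * v2 x t) / v x t ^ 3
        + 6 * v1 x t ^ 3 / v x t ^ 4) =
      fun x t => v4 x t / v x t ^ 2 - (8 * (v1 x t * v3 x t) + 6 * v2 x t ^ 2) / v x t ^ 3
        + 36 * (v1 x t ^ 2 * v2 x t) / v x t ^ 4 - 24 * v1 x t ^ 4 / v x t ^ 5 := by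
    refine dx_eq_of_hasDerivAt fun x t => ?_
    have n := hne x t
    refine ((((h3 x t).fun_div ((h0 x t).fun_pow 2) (pow_ne_zero 2 n)).fun_sub
      ((((h1 x t).fun_mul (h2 x t)).const_mul 6).fun_div ((h0 x t).fun_pow 3)
        (pow_ne_zero 3 n))).fun_add
      ((((h1 x t).fun_pow 3).const_mul 6).fun_div ((h0 x t).fun_pow 4) (pow_ne_zero 4 n))).congr_deriv ?_
    field_simp
    ring
  have w5 : dx (fun x t => v4 x t / v x t ^ 2
        - (8 * (v1 x t * v3 x t) + 6 * v2 x t ^ 2) / v x t ^ 3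
        + 36 * (v1 x t ^ 2 * v2 x t) / v x t ^ 4 - 24 * v1 x t ^ 4 / v x t ^ 5) =
      fun x t => v5 x t / v x t ^ 2
        - (10 * (v1 x t * v4 x t) + 20 * (v2 x t * v3 x t)) / v x t ^ 3
        + (60 * (v1 x t ^ 2 * v3 x t) + 90 * (v1 x t * v2 x t ^ 2)) / v x t ^ 4
        - 240 * (v1 x t ^ 3 * v2 x t) / v x t ^ 5 + 120 * v1 x t ^ 5 / v x t ^ 6 := by
    refine dx_eq_of_hasDerivAt fun x t => ?_
    have n := hne x t
    refine (((((h4 x t).fun_div ((h0 x t).fun_pow 2) (pow_ne_zero 2 n)).fun_sub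
      (((((h1 x t).fun_mul (h3 x t)).const_mul 8).fun_add
        (((h2 x t).fun_pow 2).const_mul 6)).fun_div ((h0 x t).fun_pow 3)
        (pow_ne_zero 3 n))).fun_add
      (((((h1 x t).fun_pow 2).fun_mul (h2 x t)).const_mul 36).fun_div ((h0 x t).fun_pow 4)
        (pow_ne_zero 4 n))).fun_sub
      ((((h1 x t).fun_pow 4).const_mul 24).fun_div ((h0 x t).fun_pow 5) (pow_ne_zero 5 n))).congr_deriv ?_
    field_simp
    ring
  intro x t
  rw [wt, w1, w2, w3, w4, w5, key]
  have n := hne x t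
  have n1 := hvx x t
  field_simp
  ring
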